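/- Let S ⊆ V with |S| ≤ M − 1, let w^S be the minimizer of ℓ among weight vectors supported on S, and let j ∈ V \ S. Then the marginal decrease of the gradient-matching error satisfies E(S) − E(S∪{j}) ≥ ((∇ℓ(w^S))_j)² / (4(λ + M·G²)). -/

import Mathlib

open scoped BigOperators RealInnerProductSpace

/-- The regularized gradient-matching objective
`ℓ(w) = ‖∑ᵢ wᵢ gᵢ − b‖₂² + λ ∑ᵢ wᵢ²`. -/
noncomputable def ell {V : Type*} [Fintype V] {d : ℕ}
    (g : V → EuclideanSpace ℝ (Fin d)) (b : EuclideanSpace ℝ (Fin d))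
    (lam : ℝ) (w : V → ℝ) : ℝ :=
  ‖(∑ i, w i • g i) - b‖ ^ 2 + lam * ∑ i, (w i) ^ 2

/-- `E(S) = inf { ℓ(w) : w supported on S }`. -/
noncomputable def EErr {V : Type*} [Fintype V] {d : ℕ}
    (g : V → EuclideanSpace ℝ (Fin d)) (b : EuclideanSpace ℝ (Fin d))
    (lam : ℝ) (S : Finset V) : ℝ :=
  sInf {y | ∃ w : V → ℝ, (∀ i ∉ S, w i = 0) ∧ y = ell g b lam w}

/-- The gradient of `ℓ`: `(∇ℓ(u))ⱼ = 2⟨∑ᵢ uᵢ gᵢ − b, gⱼ⟩ + 2λ uⱼ`. -/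
noncomputable def gradEll {V : Type*} [Fintype V] {d : ℕ}
    (g : V → EuclideanSpace ℝ (Fin d)) (b : EuclideanSpace ℝ (Fin d))
    (lam : ℝ) (u : V → ℝ) (j : V) : ℝ :=
  2 * ⟪(∑ i, u i • g i) - b, g j⟫ + 2 * lam * u j

/-! In the `j`-th coordinate direction `ℓ` is a quadratic polynomial with linear coefficient
`(∇ℓ(w))ⱼ` and leading coefficient `λ + ‖gⱼ‖²`, so moving from `w` to its vertex decreases `ℓ` by
exactly `((∇ℓ(w))ⱼ)² / (4(λ + ‖gⱼ‖²))`. When `w` is supported on `S`, the vertex is supported on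
`S ∪ {j}`. -/

theorem pow_le_natCast_mul_pow {R : Type*} [Semiring R] [PartialOrder R] [IsOrderedRing R]
    {x y : R} (hx : 0 ≤ x) (hxy : x ≤ y) {n : ℕ} (hn : 1 ≤ n) (k : ℕ) :
    x ^ k ≤ n * y ^ k :=
  calc
    x ^ k ≤ y ^ k := by gcongr
    _ ≤ n * y ^ k := le_mul_of_one_le_left (pow_nonneg (hx.trans hxy) k) (mod_cast Nat.mono_cast hn)

section SingleCoordinate

variable {V : Type*} [DecidableEq V]

theorem sum_add_single_smul [Fintype V] {R E : Type*} [Semiring R] [AddCommMonoid E] [Module R E]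
    (w : V → R) (g : V → E) (j : V) (t : R) :
    ∑ i, (w + Pi.single j t : V → R) i • g i = ∑ i, w i • g i + t • g j := by
  simp [add_smul, Finset.sum_add_distrib, Pi.single_apply, ite_smul]

theorem sum_add_single_sq [Fintype V] {R : Type*} [CommSemiring R] (w : V → R) (j : V) (t : R) :
    ∑ i, (w + Pi.single j t : V → R) i ^ 2 = ∑ i, w i ^ 2 + (2 * w j * t + t ^ 2) := by
  simp [add_sq, Finset.sum_add_distrib, Pi.single_apply, ite_pow, add_assoc]

theorem add_single_eq_zero_of_notMem_union {R : Type*} [AddZeroClass R] {S : Finset V} {w : V → R}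
    (hw : ∀ i ∉ S, w i = 0) (j : V) (t : R) :
    ∀ i ∉ S ∪ {j}, (w + Pi.single j t : V → R) i = 0 := by
  intro i hi
  obtain ⟨hij, hiS⟩ : i ≠ j ∧ i ∉ S := by simpa using hi
  simp [hw i hiS, hij]

end SingleCoordinate

section GradientMatching

variable {V : Type*} [Fintype V] {d : ℕ} (g : V → EuclideanSpace ℝ (Fin d))
  (b : EuclideanSpace ℝ (Fin d)) {lam : ℝ}

theorem ell_nonneg (hlam : 0 ≤ lam) (w : V → ℝ) : 0 ≤ ell g b lam w := by
  unfold ell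
  positivity

theorem EErr_le_ell (hlam : 0 ≤ lam) {S : Finset V} {w : V → ℝ} (hw : ∀ i ∉ S, w i = 0) :
    EErr g b lam S ≤ ell g b lam w := by
  refine csInf_le ⟨0, ?_⟩ ⟨w, hw, rfl⟩
  rintro _ ⟨u, -, rfl⟩
  exact ell_nonneg g b hlam u

variable {g b} in
theorem EErr_eq_ell_of_forall_le {S : Finset V} {w : V → ℝ} (hw : ∀ i ∉ S, w i = 0)
    (hmin : ∀ u : V → ℝ, (∀ i ∉ S, u i = 0) → ell g b lam w ≤ ell g b lam u) :
    EErr g b lam S = ell g b lam w := by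
  refine IsLeast.csInf_eq ⟨⟨w, hw, rfl⟩, ?_⟩
  rintro _ ⟨u, hu, rfl⟩
  exact hmin u hu

theorem ell_add_single [DecidableEq V] (lam : ℝ) (w : V → ℝ) (j : V) (t : ℝ) :
    ell g b lam (w + Pi.single j t) =
      ell g b lam w + gradEll g b lam w j * t + (lam + ‖g j‖ ^ 2) * t ^ 2 := by
  have residual :
      ∑ i, (w + Pi.single j t : V → ℝ) i • g i - b = (∑ i, w i • g i - b) + t • g j := by
    rw [sum_add_single_smul, add_sub_right_comm]
  unfold ell gradEll
  rw [residual, sum_add_single_sq, norm_add_sq_real, inner_smul_right, norm_smul, mul_pow,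
    Real.norm_eq_abs, sq_abs]
  ring

theorem ell_add_single_vertex [DecidableEq V] (w : V → ℝ) {j : V} (hj : lam + ‖g j‖ ^ 2 ≠ 0) :
    ell g b lam (w + Pi.single j (-gradEll g b lam w j / (2 * (lam + ‖g j‖ ^ 2)) : ℝ)) =
      ell g b lam w - gradEll g b lam w j ^ 2 / (4 * (lam + ‖g j‖ ^ 2)) := by
  rw [ell_add_single]
  field_simp
  ring

end GradientMatching

theorem marginal_decrease_lower_bound_general
    {V : Type*} [Fintype V] [DecidableEq V] {d : ℕ}
    (g : V → EuclideanSpace ℝ (Fin d)) (b : EuclideanSpace ℝ (Fin d))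
    {lam : ℝ} (hlam : 0 ≤ lam)
    {S : Finset V} {wS : V → ℝ} (hwS_supp : ∀ i ∉ S, wS i = 0)
    (hwS_min : ∀ w' : V → ℝ, (∀ i ∉ S, w' i = 0) → ell g b lam wS ≤ ell g b lam w')
    {j : V} (hj : lam + ‖g j‖ ^ 2 ≠ 0) :
    gradEll g b lam wS j ^ 2 / (4 * (lam + ‖g j‖ ^ 2)) ≤
      EErr g b lam S - EErr g b lam (S ∪ {j}) := by
  rw [EErr_eq_ell_of_forall_le hwS_supp hwS_min, le_sub_comm, ← ell_add_single_vertex g b wS hj]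
  exact EErr_le_ell g b hlam (add_single_eq_zero_of_notMem_union hwS_supp j _)

/-- The marginal decrease of the gradient-matching error when adding `j ∉ S`
satisfies `E(S) − E(S∪{j}) ≥ ((∇ℓ(w^S))ⱼ)² / (4(λ + M G²))`. -/
theorem marginal_decrease_lower_bound
    {V : Type*} [Fintype V] [DecidableEq V] {d : ℕ} (hd : 1 ≤ d)
    (g : V → EuclideanSpace ℝ (Fin d)) (G : ℝ) (hG : ∀ i, ‖g i‖ ≤ G)
    (b : EuclideanSpace ℝ (Fin d)) (lam : ℝ) (hlam : 0 < lam)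
    (M : ℕ) (hM : 0 < M)
    (S : Finset V) (hS : S.card ≤ M - 1)
    (wS : V → ℝ) (hwS_supp : ∀ i ∉ S, wS i = 0)
    (hwS_min : ∀ w' : V → ℝ, (∀ i ∉ S, w' i = 0) →
      ell g b lam wS ≤ ell g b lam w')
    (j : V) (hj : j ∉ S) :
    EErr g b lam S - EErr g b lam (S ∪ {j}) ≥
      (gradEll g b lam wS j) ^ 2 / (4 * (lam + M * G ^ 2)) := by
  refine le_trans ?_ (marginal_decrease_lower_bound_general g b hlam.le hwS_supp hwS_min
    (by positivity))
  gcongr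
  exact pow_le_natCast_mul_pow (norm_nonneg _) (hG j) hM 2
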